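/- arXiv:2205.08873 — 5 statements merged into one kernel-verified Lean document; each statement's English description precedes it below -/
import Mathlib

section
/- Let $G$ be a triangle-free simple graph on $n$ vertices with adjacency-matrix eigenvalues $\mu_1 \geq \mu_2 \geq \dots \geq \mu_n$. Then $\mu_1 + \mu_n \leq (3 - 2\sqrt{2})\,n$. -/
/-!
Let `x` be a unit eigenvector for an eigenvalue `l`, which may be assumed positive, and let `m` be
the least eigenvalue. Since the Laplacian is positive semidefinite,
`l = xᵀAx ≤ ∑ v, deg v * x v ^ 2 = ∑ u, ∑ v ∈ N(u), x v ^ 2`, so some vertex `u` has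
`s = ∑ v ∈ N(u), x v ^ 2 ≥ l / n`. As `G` is triangle-free, `N(u)` is independent, so the
restriction `y` of `x` to `N(u)` satisfies `yᵀAy = 0`. The Rayleigh bound for `m`, tested on the
component `y - s • x` of `y` orthogonal to `x`, gives `l * s ≤ -m * (1 - s)`, and hence
`l ^ 2 ≤ -m * (n - l)`. With `t = 1 - l / n` this yields `(l + m) / n ≤ 3 - (2 * t + 1 / t)`, and
`2 * t + 1 / t ≥ 2 * √2` by AM-GM.
-/

open Matrix SimpleGraph

section Rayleigh

variable {ι : Type*} [Fintype ι] [DecidableEq ι] {A : Matrix ι ι ℝ}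

open scoped MatrixOrder in
lemma mul_dotProduct_self_le_dotProduct_mulVec (hA : A.IsHermitian) {m : ℝ}
    (hm : ∀ i, m ≤ hA.eigenvalues i) (v : ι → ℝ) : m * (v ⬝ᵥ v) ≤ v ⬝ᵥ A *ᵥ v := by
  have hle : algebraMap ℝ _ m ≤ A :=
    algebraMap_le_of_le_spectrum (by simpa [hA.spectrum_real_eq_range_eigenvalues] using hm)
      hA.isSelfAdjoint
  have hv := (Matrix.le_iff.1 hle).dotProduct_mulVec_nonneg v
  simpa [Algebra.algebraMap_eq_smul_one, sub_mulVec, smul_mulVec] using hv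

lemma eigenvectorBasis_dotProduct_self (hA : A.IsHermitian) (i : ι) :
    (hA.eigenvectorBasis i).ofLp ⬝ᵥ (hA.eigenvectorBasis i).ofLp = 1 := by
  simpa only [EuclideanSpace.inner_eq_star_dotProduct, star_trivial] using
    hA.eigenvectorBasis.inner_eq_one i

end Rayleigh

section Graph

variable {V : Type*} [Fintype V] (G : SimpleGraph V) [DecidableRel G.Adj]

lemma sum_sum_neighborFinset_eq_sum_degree_nsmul {M : Type*} [AddCommMonoid M] (f : V → M) :
    ∑ u, ∑ v ∈ G.neighborFinset u, f v = ∑ v, G.degree v • f v := by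
  rw [Finset.sum_comm' (t' := Finset.univ) (s' := fun v ↦ G.neighborFinset v)
    (by simp [G.adj_comm])]
  simp

lemma dotProduct_adjMatrix_mulVec_le_sum_sum_neighborFinset (x : V → ℝ) :
    x ⬝ᵥ G.adjMatrix ℝ *ᵥ x ≤ ∑ u, ∑ v ∈ G.neighborFinset u, x v ^ 2 := by
  classical
  have hL := (G.posSemidef_lapMatrix ℝ).dotProduct_mulVec_nonneg x
  rw [star_trivial, lapMatrix, sub_mulVec, dotProduct_sub, dotProduct_mulVec_degMatrix] at hL
  simpa [sum_sum_neighborFinset_eq_sum_degree_nsmul, pow_two, mul_assoc] using hL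

lemma exists_dotProduct_adjMatrix_mulVec_le_card_mul_sum [Nonempty V] (x : V → ℝ) :
    ∃ u, x ⬝ᵥ G.adjMatrix ℝ *ᵥ x ≤ Fintype.card V * ∑ v ∈ G.neighborFinset u, x v ^ 2 := by
  obtain ⟨u, -, hu⟩ := Finset.exists_max_image Finset.univ
    (fun u ↦ ∑ v ∈ G.neighborFinset u, x v ^ 2) Finset.univ_nonempty
  refine ⟨u, (dotProduct_adjMatrix_mulVec_le_sum_sum_neighborFinset G x).trans ?_⟩
  simpa using Finset.sum_le_card_nsmul _ _ _ hu

variable {G} in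
lemma dotProduct_adjMatrix_mulVec_indicator_of_isIndepSet {R : Type*} [NonAssocSemiring R]
    {s : Set V} (hs : G.IsIndepSet s) (x : V → R) :
    s.indicator x ⬝ᵥ G.adjMatrix R *ᵥ s.indicator x = 0 := by
  rw [dotProduct_mulVec_adjMatrix]
  refine Finset.sum_eq_zero fun v _ ↦ Finset.sum_eq_zero fun w _ ↦ ?_
  split_ifs with hvw
  · by_cases hv : v ∈ s
    · have hw : w ∉ s := fun hw ↦ hs hv hw hvw.ne hvw
      simp [hw]
    · simp [hv]
  · rfl

variable [DecidableEq V] {G} {x : V → ℝ} {l m : ℝ}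

/-- A form of Hoffman's ratio bound, weighted by an arbitrary eigenvector `x`. -/
lemma mul_sum_sq_le_of_isIndepSet (hm : ∀ i, m ≤ (G.isHermitian_adjMatrix ℝ).eigenvalues i)
    (hx : G.adjMatrix ℝ *ᵥ x = l • x) (hunit : x ⬝ᵥ x = 1) {s : Finset V}
    (hs : G.IsIndepSet (s : Set V)) (hpos : 0 < ∑ v ∈ s, x v ^ 2) :
    l * ∑ v ∈ s, x v ^ 2 ≤ -m * (1 - ∑ v ∈ s, x v ^ 2) := by
  set t := ∑ v ∈ s, x v ^ 2 with ht
  set y := (s : Set V).indicator x with hy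
  have hyx : y ⬝ᵥ x = t := by
    simp [hy, ht, dotProduct, Set.indicator_apply, pow_two]
  have hxy : x ⬝ᵥ y = t := by rw [dotProduct_comm, hyx]
  have hyy : y ⬝ᵥ y = t := by
    simp [hy, ht, dotProduct, Set.indicator_apply, pow_two]
  have hyAy : y ⬝ᵥ G.adjMatrix ℝ *ᵥ y = 0 :=
    dotProduct_adjMatrix_mulVec_indicator_of_isIndepSet hs x
  have hxAy : x ⬝ᵥ G.adjMatrix ℝ *ᵥ y = l * t := by
    rw [dotProduct_mulVec, ← mulVec_transpose, transpose_adjMatrix, hx, smul_dotProduct, hxy,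
      smul_eq_mul]
  have hnorm : (y - t • x) ⬝ᵥ (y - t • x) = t * (1 - t) := by
    simp only [dotProduct_sub, sub_dotProduct, smul_dotProduct, dotProduct_smul, hyy, hyx, hxy,
      hunit, smul_eq_mul]
    ring
  have hform : (y - t • x) ⬝ᵥ G.adjMatrix ℝ *ᵥ (y - t • x) = -(t * (l * t)) := by
    simp only [mulVec_sub, mulVec_smul, hx, dotProduct_sub, sub_dotProduct, smul_dotProduct,
      dotProduct_smul, hyx, hyAy, hxAy, hunit, smul_eq_mul]
    ring
  have hray := mul_dotProduct_self_le_dotProduct_mulVec (G.isHermitian_adjMatrix ℝ) hm (y - t • x)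
  rw [hnorm, hform] at hray
  refine le_of_mul_le_mul_left ?_ hpos
  linarith

lemma lt_card_and_sq_le_neg_mul_card_sub_of_cliqueFree (hG : G.CliqueFree 3)
    (hm : ∀ i, m ≤ (G.isHermitian_adjMatrix ℝ).eigenvalues i)
    (hx : G.adjMatrix ℝ *ᵥ x = l • x) (hunit : x ⬝ᵥ x = 1) (hl : 0 < l) :
    l < Fintype.card V ∧ l ^ 2 ≤ -m * (Fintype.card V - l) := by
  rcases isEmpty_or_nonempty V with _ | _
  · simp at hunit
  have hml : m ≤ l := by
    simpa [hx, hunit] using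
      mul_dotProduct_self_le_dotProduct_mulVec (G.isHermitian_adjMatrix ℝ) hm x
  obtain ⟨u, hu⟩ := exists_dotProduct_adjMatrix_mulVec_le_card_mul_sum G x
  have hcard : (0 : ℝ) < Fintype.card V := by exact_mod_cast Fintype.card_pos
  rw [hx, dotProduct_smul, hunit, smul_eq_mul, mul_one] at hu
  have hpos : 0 < ∑ v ∈ G.neighborFinset u, x v ^ 2 :=
    pos_of_mul_pos_right (hl.trans_le hu) hcard.le
  have hratio := mul_sum_sq_le_of_isIndepSet hm hx hunit
    (by simpa using isIndepSet_neighborSet_of_triangleFree G hG u) hpos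
  have hle : ∑ v ∈ G.neighborFinset u, x v ^ 2 ≤ 1 := by
    rw [← hunit, dotProduct]
    simpa only [pow_two] using Finset.sum_le_univ_sum_of_nonneg fun v ↦ mul_self_nonneg (x v)
  set t := ∑ v ∈ G.neighborFinset u, x v ^ 2
  have ht : t < 1 := by
    refine hle.lt_of_ne fun h ↦ ?_
    rw [h] at hratio
    linarith
  refine ⟨hu.trans_lt (mul_lt_of_lt_one_right hcard ht), ?_⟩
  have hmul : l * (l - m) ≤ Fintype.card V * -m := calc
    l * (l - m) ≤ Fintype.card V * t * (l - m) :=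
      mul_le_mul_of_nonneg_right hu (sub_nonneg.2 hml)
    _ = Fintype.card V * (t * (l - m)) := mul_assoc ..
    _ ≤ Fintype.card V * -m := by gcongr; linarith
  linarith

end Graph

lemma two_mul_sqrt_two_le_three : 2 * √2 ≤ 3 := by
  nlinarith [Real.sq_sqrt (zero_le_two (α := ℝ)), Real.sqrt_nonneg 2]

lemma add_le_of_sq_le_neg_mul_sub {N l m : ℝ} (hlN : l < N) (h : l ^ 2 ≤ -m * (N - l)) :
    l + m ≤ (3 - 2 * √2) * N := by
  have hsq : (3 - 2 * √2) * N * (N - l) - l * (N - 2 * l) = (√2 * l - (√2 - 1) * N) ^ 2 := by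
    linear_combination -(l ^ 2 - 2 * l * N + N ^ 2) * Real.sq_sqrt (zero_le_two (α := ℝ))
  refine le_of_mul_le_mul_right ?_ (sub_pos.2 hlN)
  calc
    (l + m) * (N - l) ≤ l * (N - 2 * l) := by linarith
    _ ≤ (3 - 2 * √2) * N * (N - l) := by
      rw [← sub_nonneg, hsq]
      exact sq_nonneg _

theorem triangle_free_sum_extreme_eigenvalues_general {V : Type*} [Fintype V] [DecidableEq V]
    {G : SimpleGraph V} [DecidableRel G.Adj] (hG : G.CliqueFree 3) (i : V) {m : ℝ}
    (hm : ∀ j, m ≤ (G.isHermitian_adjMatrix ℝ).eigenvalues j) :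
    (G.isHermitian_adjMatrix ℝ).eigenvalues i + m ≤ (3 - 2 * √2) * Fintype.card V := by
  let hA := G.isHermitian_adjMatrix ℝ
  rcases le_or_gt (hA.eigenvalues i) 0 with hl | hl
  · have hbound : 0 ≤ (3 - 2 * √2) * Fintype.card V :=
      mul_nonneg (sub_nonneg.2 two_mul_sqrt_two_le_three) (Nat.cast_nonneg _)
    linarith [hm i]
  · obtain ⟨hcard, hsq⟩ := lt_card_and_sq_le_neg_mul_card_sub_of_cliqueFree hG hm
      (hA.mulVec_eigenvectorBasis i) (eigenvectorBasis_dotProduct_self hA i) hl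
    exact add_le_of_sq_le_neg_mul_sub hcard hsq

/-- Let `G` be a triangle-free simple graph on `n` vertices with
adjacency-matrix eigenvalues `μ 0 ≥ μ 1 ≥ ⋯ ≥ μ (n-1)` (listed in nonincreasing order).
Then `μ₁ + μₙ ≤ (3 - 2√2) n`. -/
theorem triangle_free_sum_extreme_eigenvalues
    (n : ℕ) (hn : 0 < n) (G : SimpleGraph (Fin n)) [DecidableRel G.Adj]
    (hG : G.CliqueFree 3)
    (hA : (G.adjMatrix ℝ).IsHermitian)
    (μ : Fin n → ℝ) (hmono : Antitone μ)
    (hperm : ∃ σ : Equiv.Perm (Fin n), ∀ i, μ i = hA.eigenvalues (σ i)) :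
    μ ⟨0, hn⟩ + μ ⟨n - 1, by omega⟩ ≤ (3 - 2 * Real.sqrt 2) * n := by
  obtain ⟨σ, hσ⟩ := hperm
  simpa [hσ ⟨0, hn⟩] using triangle_free_sum_extreme_eigenvalues_general hG (σ ⟨0, hn⟩) fun j ↦
    (hmono (Fin.le_def.2 (Nat.le_sub_one_of_lt (σ.symm j).isLt))).trans_eq
      (by rw [hσ, σ.apply_symm_apply])
end

section
/- Let $G$ be a triangle-free simple graph on $n$ vertices with at least one edge, and let $\mu_1 \geq \mu_2 \geq \dots \geq \mu_n$ be its adjacency-matrix eigenvalues. Then $\mu_1 \leq \dfrac{-n\,\mu_n}{\mu_1 - \mu_n}$. -/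
open Matrix SimpleGraph

/-!
Power sums of the eigenvalues are traces of powers of the adjacency matrix `A`: the square has
trace `2m`, where `m` is the number of edges, and the cube has trace `0`, as closed walks of
length three are triangles. Every term of `∑ᵢ (μᵢ - μₙ) μᵢ²` is nonnegative, so that
`(μ₁ - μₙ) μ₁² ≤ tr A³ - μₙ tr A² = -2m μₙ`; in particular `μₙ ≤ 0`. Testing `A` against the
all-ones vector gives `2m ≤ n μ₁`, and dividing by `μ₁ (μ₁ - μₙ)` finishes the argument.
-/

section Hermitian

variable {𝕜 ι : Type*} [RCLike 𝕜] [Fintype ι] [DecidableEq ι] {A : Matrix ι ι 𝕜}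

theorem trace_pow_eq_sum_eigenvalues_pow (hA : A.IsHermitian) (k : ℕ) :
    (A ^ k).trace = ∑ i, (hA.eigenvalues i : 𝕜) ^ k := by
  conv_lhs => rw [hA.spectral_theorem, ← map_pow, Unitary.conjStarAlgAut_apply,
    trace_mul_cycle, Unitary.coe_star_mul_self, one_mul, diagonal_pow, trace_diagonal]
  rfl

open scoped MatrixOrder in
theorem re_dotProduct_mulVec_le_of_mem_upperBounds_spectrum (hA : A.IsHermitian) {c : ℝ}
    (hc : c ∈ upperBounds (spectrum ℝ A)) (x : ι → 𝕜) :
    RCLike.re (star x ⬝ᵥ (A *ᵥ x)) ≤ c * RCLike.re (star x ⬝ᵥ x) := by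
  have hle : A ≤ algebraMap ℝ (Matrix ι ι 𝕜) c :=
    le_algebraMap_of_spectrum_le (fun _ h => hc h) hA.isSelfAdjoint
  have hnonneg := (Matrix.le_iff.mp hle).re_dotProduct_nonneg x
  rw [Algebra.algebraMap_eq_smul_one, sub_mulVec, smul_mulVec, one_mulVec, dotProduct_sub,
    dotProduct_smul, map_sub, RCLike.smul_re] at hnonneg
  exact sub_nonneg.mp hnonneg

theorem sub_mul_sq_le_re_trace_pow_three_sub (hA : A.IsHermitian) {a b : ℝ}
    (ha : a ∈ spectrum ℝ A) (hb : b ∈ lowerBounds (spectrum ℝ A)) :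
    (a - b) * a ^ 2 ≤ RCLike.re (A ^ 3).trace - b * RCLike.re (A ^ 2).trace := by
  rw [hA.spectrum_real_eq_range_eigenvalues] at ha hb
  obtain ⟨j, rfl⟩ := ha
  have hre (k : ℕ) : RCLike.re (A ^ k).trace = ∑ i, hA.eigenvalues i ^ k := by
    simp only [trace_pow_eq_sum_eigenvalues_pow hA, map_sum, RCLike.re_ofReal_pow]
  calc (hA.eigenvalues j - b) * hA.eigenvalues j ^ 2
      ≤ ∑ i, (hA.eigenvalues i - b) * hA.eigenvalues i ^ 2 :=
        Finset.single_le_sum (f := fun i => (hA.eigenvalues i - b) * hA.eigenvalues i ^ 2)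
          (fun i _ => mul_nonneg (sub_nonneg.mpr (hb ⟨i, rfl⟩)) (sq_nonneg _)) (Finset.mem_univ j)
    _ = ∑ i, (hA.eigenvalues i ^ 3 - b * hA.eigenvalues i ^ 2) :=
        Finset.sum_congr rfl fun i _ => by ring
    _ = RCLike.re (A ^ 3).trace - b * RCLike.re (A ^ 2).trace := by
        rw [hre, hre, Finset.sum_sub_distrib, Finset.mul_sum]

theorem spectrum_eq_range_of_eigenvalues_perm (hA : A.IsHermitian) {μ : ι → ℝ}
    (hμ : ∃ σ : Equiv.Perm ι, ∀ i, μ i = hA.eigenvalues (σ i)) :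
    spectrum ℝ A = Set.range μ := by
  obtain ⟨σ, hσ⟩ := hμ
  rw [hA.spectrum_real_eq_range_eigenvalues, funext hσ]
  exact (σ.surjective.range_comp hA.eigenvalues).symm

end Hermitian

section Adjacency

variable {V : Type*} [Fintype V] [DecidableEq V] {G : SimpleGraph V} [DecidableRel G.Adj]

theorem trace_adjMatrix_sq (R : Type*) [Semiring R] :
    (G.adjMatrix R ^ 2).trace = 2 * (G.edgeFinset.card : R) := by
  simp only [sq, trace, diag_apply, adjMatrix_mul_self_apply_self]
  exact_mod_cast congrArg (Nat.cast (R := R)) G.sum_degrees_eq_twice_card_edges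

theorem trace_adjMatrix_pow_three_of_cliqueFree (R : Type*) [Semiring R] (hG : G.CliqueFree 3) :
    (G.adjMatrix R ^ 3).trace = 0 := by
  refine Finset.sum_eq_zero fun u _ => ?_
  rw [diag_apply, pow_succ', sq, adjMatrix_mul_apply]
  refine Finset.sum_eq_zero fun v huv => ?_
  rw [adjMatrix_mul_apply]
  refine Finset.sum_eq_zero fun w hvw => ?_
  rw [mem_neighborFinset] at huv hvw
  have hwu : ¬G.Adj w u := fun hwu => hG {u, v, w} (is3Clique_triple_iff.mpr ⟨huv, hwu.symm, hvw⟩)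
  rw [adjMatrix_apply, if_neg hwu]

theorem two_mul_card_edgeFinset_le_mul_card {c : ℝ}
    (hc : c ∈ upperBounds (spectrum ℝ (G.adjMatrix ℝ))) :
    2 * (G.edgeFinset.card : ℝ) ≤ c * Fintype.card V := by
  calc 2 * (G.edgeFinset.card : ℝ) = Fintype.card G.Dart := by
        rw [G.dart_card_eq_twice_card_edges, Nat.cast_mul, Nat.cast_ofNat]
    _ = 1 ⬝ᵥ (G.adjMatrix ℝ *ᵥ 1) := by
        rw [G.natCast_card_dart_eq_dotProduct, dotProduct_comm]
    _ ≤ c * (1 ⬝ᵥ 1) := by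
        simpa only [star_one, RCLike.re_to_real] using
          re_dotProduct_mulVec_le_of_mem_upperBounds_spectrum (G.isHermitian_adjMatrix ℝ) hc 1
    _ = c * Fintype.card V := by rw [one_dotProduct_one]

theorem triangle_free_largest_eigenvalue_bound_general (hG : G.CliqueFree 3)
    (hedge : G.edgeSet.Nonempty) {a b : ℝ} (ha : IsGreatest (spectrum ℝ (G.adjMatrix ℝ)) a)
    (hb : b ∈ lowerBounds (spectrum ℝ (G.adjMatrix ℝ))) :
    a ≤ -(Fintype.card V : ℝ) * b / (a - b) := by
  have hm : 0 < 2 * (G.edgeFinset.card : ℝ) := by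
    have : 0 < G.edgeFinset.card := Finset.card_pos.mpr (Set.toFinset_nonempty.mpr hedge)
    positivity
  have hcard := two_mul_card_edgeFinset_le_mul_card ha.2
  have hcube : (a - b) * a ^ 2 ≤ -b * (2 * G.edgeFinset.card) := by
    simpa [trace_adjMatrix_sq, trace_adjMatrix_pow_three_of_cliqueFree ℝ hG] using
      sub_mul_sq_le_re_trace_pow_three_sub (G.isHermitian_adjMatrix ℝ) ha.1 hb
  have ha_pos : 0 < a := pos_of_mul_pos_left (hm.trans_le hcard) (Nat.cast_nonneg _)
  have hb_nonpos : b ≤ 0 := by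
    have h := (mul_nonneg (sub_nonneg.mpr (hb ha.1)) (sq_nonneg a)).trans hcube
    exact neg_nonneg.mp (nonneg_of_mul_nonneg_left h hm)
  rw [le_div_iff₀ (by linarith)]
  refine le_of_mul_le_mul_left ?_ ha_pos
  calc a * (a * (a - b)) = (a - b) * a ^ 2 := by ring
    _ ≤ -b * (2 * G.edgeFinset.card) := hcube
    _ ≤ -b * (a * Fintype.card V) := mul_le_mul_of_nonneg_left hcard (neg_nonneg.mpr hb_nonpos)
    _ = a * (-(Fintype.card V : ℝ) * b) := by ring

end Adjacency

/-- Let `G` be a triangle-free simple graph on `n` vertices with at least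
one edge, and let `μ₁ ≥ ⋯ ≥ μₙ` be its adjacency-matrix eigenvalues. Then
`μ₁ ≤ (-n μₙ) / (μ₁ - μₙ)`. -/
theorem triangle_free_largest_eigenvalue_bound
    (n : ℕ) (hn : 0 < n) (G : SimpleGraph (Fin n)) [DecidableRel G.Adj]
    (hG : G.CliqueFree 3)
    (hedge : G.edgeSet.Nonempty)
    (hA : (G.adjMatrix ℝ).IsHermitian)
    (μ : Fin n → ℝ) (hmono : Antitone μ)
    (hperm : ∃ σ : Equiv.Perm (Fin n), ∀ i, μ i = hA.eigenvalues (σ i)) :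
    μ ⟨0, hn⟩ ≤ (-(n : ℝ) * μ ⟨n - 1, by omega⟩) / (μ ⟨0, hn⟩ - μ ⟨n - 1, by omega⟩) := by
  have hspec := spectrum_eq_range_of_eigenvalues_perm hA hperm
  simpa using triangle_free_largest_eigenvalue_bound_general hG hedge
    (hspec ▸ ⟨⟨_, rfl⟩, Set.forall_mem_range.mpr fun i => hmono (Nat.zero_le i)⟩)
    (hspec ▸ Set.forall_mem_range.mpr fun i => hmono (Nat.le_sub_one_of_lt i.2))
end

section
/- Let $G$ be a triangle-free simple graph that is strongly regular with parameters $(n, k, 0, b)$, and let $\mu_1 \geq \mu_2 \geq \dots \geq \mu_n$ be its adjacency-matrix eigenvalues. Then $\mu_1 + \mu_n \leq 0.14\, n$. -/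
open Matrix SimpleGraph

/-!
The largest eigenvalue is `k`. Apart from degenerate cases, the least one is `-s`, where `r ≥ 0` and
`-s` are the roots of `x² = -b x + (k - b)`; hence `k = s (r + 1) - r` and `k - s = r (s - 1)`. Two
facts restrict `r` and `s`. The multiplicity of `-s` is an integer, so `r` is an integer unless the
graph is the pentagon. The projection onto the `-s`-eigenspace remains positive semidefinite when
its entries are cubed (Schur), and this Krein condition reads `s ≤ r² + 2 r`. Since
`n (s - r) = (k - r) (k + s)`, the bound `k - s ≤ 0.14 n` becomes a polynomial inequality in `r` and
`s`, in which the Higman–Sims graph (`r = 2`, `s = 8`) attains equality.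
-/

section LinearAlgebra

variable {ι : Type*} [Fintype ι]

lemma posSemidef_of_mul_self_eq_smul {F : Matrix ι ι ℝ} (hF : F.IsHermitian) {t : ℝ} (ht : 0 < t)
    (hsq : F * F = t • F) : F.PosSemidef := by
  have hFt : F = t⁻¹ • (Fᴴ * F) := by rw [hF.eq, hsq, inv_smul_smul₀ ht.ne']
  rw [hFt]
  exact (posSemidef_conjTranspose_mul_self F).smul (inv_nonneg.mpr ht.le)

lemma sum_entries_nonneg_of_posSemidef {M : Matrix ι ι ℝ} (hM : M.PosSemidef) :
    0 ≤ ∑ u, ∑ v, M u v := by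
  simpa [dotProduct, mulVec] using hM.dotProduct_mulVec_nonneg (1 : ι → ℝ)

lemma sum_cube_entries_nonneg_of_posSemidef {M : Matrix ι ι ℝ} (hM : M.PosSemidef) :
    0 ≤ ∑ u, ∑ v, M u v ^ 3 := by
  simpa only [hadamard_apply, pow_succ, pow_zero, one_mul] using
    sum_entries_nonneg_of_posSemidef ((hM.hadamard hM).hadamard hM)

lemma trace_eq_rank_of_isIdempotentElem {K : Type*} [Field K] {P : Matrix ι ι K}
    (hP : IsIdempotentElem P) : P.trace = P.rank := by
  classical
  have hP' : IsIdempotentElem (toLin' P) := by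
    rw [IsIdempotentElem, Module.End.mul_eq_comp, ← toLin'_mul, hP.eq]
  rw [← trace_toLin'_eq]
  exact (LinearMap.IsIdempotentElem.isProj_range _ hP').trace

lemma mem_spectrum_of_mul_eq_smul [DecidableEq ι] {R : Type*} [CommRing R]
    {A F : Matrix ι ι R} {t : R} (hF : F ≠ 0) (hAF : A * F = t • F) : t ∈ spectrum R A := by
  intro hunit
  refine hF (hunit.mul_right_eq_zero.mp ?_)
  rw [sub_mul, hAF, Algebra.algebraMap_eq_smul_one, smul_mul, one_mul, sub_self]

end LinearAlgebra

lemma exists_int_eq_or_irrational_of_sq_eq {x : ℝ} {p q : ℤ} (hx : x ^ 2 = p * x + q) :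
    (∃ z : ℤ, x = z) ∨ Irrational x := by
  refine or_iff_not_imp_right.mpr fun hrat => ?_
  obtain ⟨y, rfl⟩ := not_not.mp hrat
  have hy : y ^ 2 = p * y + q := by exact_mod_cast hx
  have hint : IsIntegral ℤ y := by
    refine ⟨.X ^ 2 - .C p * .X - .C q, by monicity!, ?_⟩
    simp [-eq_intCast, hy]
  obtain ⟨z, rfl⟩ := IsIntegrallyClosed.isIntegral_iff.mp hint
  exact ⟨z, by simp⟩

/-- `r` and `-s` are the eigenvalues of a strongly regular graph with parameters `(n, k, ℓ, m)` on
the orthogonal complement of the all-ones vector, i.e. the roots of `x² = (ℓ - m) x + (k - m)`. The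
sign of `s` is chosen so that both numbers are nonnegative in all cases of interest. -/
structure IsRestrictedPair (k ℓ m : ℕ) (r s : ℝ) : Prop where
  sub_eq : r - s = ℓ - m
  mul_eq : r * s = k - m

lemma exists_isRestrictedPair {k m : ℕ} (ℓ : ℕ) (hmk : m ≤ k) :
    ∃ r s : ℝ, 0 ≤ r ∧ IsRestrictedPair k ℓ m r s := by
  have hmk' : (0 : ℝ) ≤ k - m := sub_nonneg.mpr (by exact_mod_cast hmk)
  set p : ℝ := ℓ - m
  set d := √(p ^ 2 + 4 * (k - m))
  have hd_sq : d ^ 2 = p ^ 2 + 4 * (k - m) := Real.sq_sqrt (by positivity)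
  have hpd : |p| ≤ d := Real.abs_le_sqrt (by linarith)
  exact ⟨(d + p) / 2, (d - p) / 2, by linarith [(abs_le.mp hpd).1], by ring,
    by linear_combination hd_sq / 4⟩

variable {V : Type*} [Fintype V]

section AdjMatrix

variable {G : SimpleGraph V} [DecidableRel G.Adj] {k : ℕ} {R : Type*} [Semiring R]

lemma le_of_mem_spectrum_adjMatrix [DecidableEq V] (hk : ∀ v, G.degree v ≤ k) {θ : ℝ}
    (hθ : θ ∈ spectrum ℝ (G.adjMatrix ℝ)) : θ ≤ k := by
  rw [← spectrum_toLin', ← Module.End.hasEigenvalue_iff_mem_spectrum] at hθ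
  obtain ⟨u, hu⟩ := eigenvalue_mem_ball hθ
  calc θ ≤ ∑ v ∈ Finset.univ.erase u, ‖G.adjMatrix ℝ u v‖ := by
        simpa using (le_abs_self _).trans (mem_closedBall_iff_norm.mp hu)
    _ ≤ ∑ v, ‖G.adjMatrix ℝ u v‖ :=
        Finset.sum_le_sum_of_subset_of_nonneg (Finset.erase_subset _ _) fun _ _ _ => norm_nonneg _
    _ = G.degree u := by simp [adjMatrix_apply, apply_ite, degree, neighborFinset_eq_filter]
    _ ≤ k := by exact_mod_cast hk u

lemma adjMatrix_mul_allOnes (hG : G.IsRegularOfDegree k) :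
    G.adjMatrix R * of 1 = (k : R) • of 1 := by
  ext u v
  simp [hG.degree_eq u]

lemma allOnes_mul_adjMatrix (hG : G.IsRegularOfDegree k) :
    of 1 * G.adjMatrix R = (k : R) • of 1 := by
  ext u v
  simp [hG.degree_eq v]

variable (V R) in
lemma allOnes_mul_allOnes :
    (of 1 * of 1 : Matrix V V R) = (Fintype.card V : R) • of 1 := by
  ext u v
  simp [mul_apply]

end AdjMatrix

section StronglyRegular

variable {G : SimpleGraph V} [DecidableRel G.Adj] {n k ℓ m : ℕ} {r s : ℝ}

lemma adjMatrix_mul_self [DecidableEq V] (hG : G.IsSRGWith n k ℓ m)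
    (hrs : IsRestrictedPair k ℓ m r s) : G.adjMatrix ℝ * G.adjMatrix ℝ =
      (r - s) • G.adjMatrix ℝ + (r * s) • 1 + (m : ℝ) • of 1 := by
  rw [← pow_two, hG.matrix_eq, ← one_add_adjMatrix_add_compl_adjMatrix_eq_of_one ℝ G,
    compl_adjMatrix_eq_adjMatrix_compl, hrs.sub_eq, hrs.mul_eq]
  module

/-- The double count `k (k - ℓ - 1) = (n - k - 1) m` in terms of the eigenvalues. -/
lemma degree_sub_mul_degree_add [Nonempty V] (hG : G.IsSRGWith n k ℓ m)
    (hrs : IsRestrictedPair k ℓ m r s) : (k - r) * (k + s) = n * m := by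
  classical
  have hAAJ : (G.adjMatrix ℝ * G.adjMatrix ℝ) * of 1 = ((k : ℝ) * k) • of 1 := by
    rw [Matrix.mul_assoc, adjMatrix_mul_allOnes hG.regular, Matrix.mul_smul,
      adjMatrix_mul_allOnes hG.regular, smul_smul]
  rw [adjMatrix_mul_self hG hrs, add_mul, add_mul, smul_mul, smul_mul, smul_mul,
    adjMatrix_mul_allOnes hG.regular, allOnes_mul_allOnes, one_mul, hG.card] at hAAJ
  obtain ⟨u⟩ := ‹Nonempty V›
  have hentry := congrFun₂ hAAJ u u
  simp only [Matrix.add_apply, Matrix.smul_apply, of_apply, Pi.one_apply,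
    smul_eq_mul, mul_one] at hentry
  linear_combination -hentry

section LeastEigenmatrix

variable [DecidableEq V]

variable (G k r) in
/-- `r + s` times the orthogonal projection onto the `-s`-eigenspace of a strongly regular graph of
degree `k` with restricted eigenvalues `r` and `-s`: the matrix `r I - A` kills the `r`-eigenspace,
and the multiple of the all-ones matrix makes the sum kill the constant vectors as well. -/
noncomputable def leastEigenmatrix : Matrix V V ℝ :=
  r • 1 - G.adjMatrix ℝ + ((k - r) / Fintype.card V) • of 1

variable (G k r) in
lemma isHermitian_leastEigenmatrix : (leastEigenmatrix G k r).IsHermitian := by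
  refine .ext fun u v => ?_
  simp [leastEigenmatrix, one_apply, eq_comm, G.adj_comm]

variable (G) in
lemma trace_leastEigenmatrix [Nonempty V] (k : ℕ) (r : ℝ) :
    (leastEigenmatrix G k r).trace = (Fintype.card V - 1) * r + k := by
  have hcard : (Fintype.card V : ℝ) ≠ 0 := by positivity
  have htrace_allOnes : trace (of 1 : Matrix V V ℝ) = Fintype.card V := by simp [trace]
  rw [leastEigenmatrix, trace_add, trace_sub, trace_smul, trace_smul, trace_one, trace_adjMatrix,
    htrace_allOnes, smul_eq_mul, smul_eq_mul, div_mul_cancel₀ _ hcard]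
  ring

lemma allOnes_mul_leastEigenmatrix [Nonempty V] (hG : G.IsRegularOfDegree k) :
    of 1 * leastEigenmatrix G k r = 0 := by
  have hcard : (Fintype.card V : ℝ) ≠ 0 := by positivity
  rw [leastEigenmatrix, mul_add, mul_sub, Matrix.mul_smul, Matrix.mul_smul, mul_one,
    allOnes_mul_adjMatrix hG, allOnes_mul_allOnes, smul_smul, div_mul_cancel₀ _ hcard]
  module

lemma adjMatrix_mul_leastEigenmatrix [Nonempty V] (hG : G.IsSRGWith n k ℓ m)
    (hrs : IsRestrictedPair k ℓ m r s) :
    G.adjMatrix ℝ * leastEigenmatrix G k r = (-s) • leastEigenmatrix G k r := by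
  have hcard : (Fintype.card V : ℝ) ≠ 0 := by positivity
  have hm : (m : ℝ) = (k - r) / Fintype.card V * (k + s) := by
    rw [div_mul_eq_mul_div, degree_sub_mul_degree_add hG hrs, ← hG.card,
      mul_div_cancel_left₀ _ hcard]
  rw [leastEigenmatrix, mul_add, mul_sub, Matrix.mul_smul, Matrix.mul_smul, mul_one,
    adjMatrix_mul_self hG hrs, adjMatrix_mul_allOnes hG.regular, hm]
  module

lemma leastEigenmatrix_mul_self [Nonempty V] (hG : G.IsSRGWith n k ℓ m)
    (hrs : IsRestrictedPair k ℓ m r s) :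
    leastEigenmatrix G k r * leastEigenmatrix G k r = (r + s) • leastEigenmatrix G k r := by
  nth_rw 1 [leastEigenmatrix]
  rw [add_mul, sub_mul, smul_mul, smul_mul, one_mul, adjMatrix_mul_leastEigenmatrix hG hrs,
    allOnes_mul_leastEigenmatrix hG.regular]
  module

lemma neg_mem_spectrum_adjMatrix [Nonempty V] (hG : G.IsSRGWith n k ℓ m)
    (hrs : IsRestrictedPair k ℓ m r s) (hk : 0 < k) (hr : 0 ≤ r) :
    -s ∈ spectrum ℝ (G.adjMatrix ℝ) := by
  refine mem_spectrum_of_mul_eq_smul (fun hzero => ?_) (adjMatrix_mul_leastEigenmatrix hG hrs)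
  have htrace := trace_leastEigenmatrix G k r
  rw [hzero, trace_zero] at htrace
  have hcard : (1 : ℝ) ≤ Fintype.card V := by exact_mod_cast Fintype.card_pos
  have hk' : (0 : ℝ) < k := by exact_mod_cast hk
  linarith [mul_nonneg (sub_nonneg.mpr hcard) hr]

lemma sum_cube_leastEigenmatrix (hG : G.IsRegularOfDegree k) {c : ℝ}
    (hc : c = (k - r) / Fintype.card V) :
    ∑ u, ∑ v, leastEigenmatrix G k r u v ^ 3 = Fintype.card V *
      ((r + c) ^ 3 + k * (c - 1) ^ 3 + (Fintype.card V - 1 - k) * c ^ 3) := by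
  have hentry (u v : V) : leastEigenmatrix G k r u v ^ 3 =
      (if u = v then (r + c) ^ 3 - c ^ 3 else 0) +
        (if G.Adj u v then (c - 1) ^ 3 - c ^ 3 else 0) + c ^ 3 := by
    rcases eq_or_ne u v with rfl | huv
    · simp [leastEigenmatrix, hc]
    · by_cases hadj : G.Adj u v <;> simp [leastEigenmatrix, hc, huv, hadj, neg_add_eq_sub]
  have hrow (u : V) : ∑ v, leastEigenmatrix G k r u v ^ 3 =
      (r + c) ^ 3 + k * (c - 1) ^ 3 + (Fintype.card V - 1 - k) * c ^ 3 := by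
    simp only [hentry, Finset.sum_add_distrib, Finset.sum_ite_eq, Finset.mem_univ, if_true,
      ← Finset.sum_filter, ← neighborFinset_eq_filter, Finset.sum_const,
      card_neighborFinset_eq_degree, hG.degree_eq u, Finset.card_univ, nsmul_eq_mul]
    ring
  rw [Fintype.sum_congr _ _ hrow, Finset.sum_const, Finset.card_univ, nsmul_eq_mul]

end LeastEigenmatrix

lemma exists_nat_mul_add_eq [Nonempty V] (hG : G.IsSRGWith n k ℓ m)
    (hrs : IsRestrictedPair k ℓ m r s) (hne : r + s ≠ 0) :
    ∃ g : ℕ, g * (r + s) = (n - 1) * r + k := by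
  classical
  have hidem : IsIdempotentElem ((r + s)⁻¹ • leastEigenmatrix G k r) := by
    rw [IsIdempotentElem, smul_mul, Matrix.mul_smul, leastEigenmatrix_mul_self hG hrs,
      inv_smul_smul₀ hne]
  have hrank := trace_eq_rank_of_isIdempotentElem hidem
  rw [trace_smul, trace_leastEigenmatrix, hG.card, smul_eq_mul, inv_mul_eq_iff_eq_mul₀ hne]
    at hrank
  exact ⟨_, by rw [hrank, mul_comm]⟩

/-- An irrational `r` is conjugate to `-s`, which forces the two multiplicities to agree. -/
lemma exists_int_eq_or_two_mul_degree_eq [Nonempty V] (hG : G.IsSRGWith n k ℓ m)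
    (hrs : IsRestrictedPair k ℓ m r s) (hne : r + s ≠ 0) :
    (∃ z : ℤ, r = z) ∨ 2 * (k : ℝ) = (n - 1) * (m - ℓ) := by
  obtain ⟨hsub, hmul⟩ := hrs
  have hr : r ^ 2 = ((ℓ - m : ℤ) : ℝ) * r + (k - m : ℤ) := by
    push_cast
    linear_combination hmul + r * hsub
  refine (exists_int_eq_or_irrational_of_sq_eq hr).imp_right fun hirr => ?_
  obtain ⟨g, hg⟩ := exists_nat_mul_add_eq hG ⟨hsub, hmul⟩ hne
  have hlin : ((2 * g - (n - 1) : ℤ) : ℝ) * r = (k + g * (ℓ - m) : ℤ) := by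
    push_cast
    linear_combination hg + g * hsub
  have hcoeff : (2 * g - (n - 1) : ℤ) = 0 := by
    by_contra hcoeff
    exact (hirr.intCast_mul hcoeff).ne_int _ hlin
  have hmult : (2 : ℝ) * g = n - 1 := by exact_mod_cast sub_eq_zero.mp hcoeff
  rw [hcoeff, Int.cast_zero, zero_mul] at hlin
  push_cast at hlin
  linear_combination -2 * hlin + (m - ℓ : ℝ) * hmult

/-- The Krein condition `q₂₂² ≥ 0`: the projection onto the `-s`-eigenspace is positive
semidefinite, hence so is its entrywise cube, by the Schur product theorem. -/
lemma krein_condition [Nonempty V] (hG : G.IsSRGWith n k ℓ m)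
    (hrs : IsRestrictedPair k ℓ m r s) (hk : 0 < k) (hr : 0 ≤ r) (hs : 0 < s) :
    (1 - s) * (k - s - 2 * r * s) ≤ (k - s) * (r + 1) ^ 2 := by
  classical
  have hcard : (0 : ℝ) < Fintype.card V := by positivity
  obtain ⟨c, hc⟩ : ∃ c : ℝ, c = (k - r) / Fintype.card V := ⟨_, rfl⟩
  have hnc : Fintype.card V * c = k - r := by rw [hc, mul_div_cancel₀ _ hcard.ne']
  have hks : c * (k + s) = k - r * s := by
    refine mul_left_cancel₀ hcard.ne' ?_
    rw [← mul_assoc, hnc, degree_sub_mul_degree_add hG hrs, hG.card, hrs.mul_eq]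
    ring
  have hpsd := posSemidef_of_mul_self_eq_smul (isHermitian_leastEigenmatrix G k r)
    (by positivity) (leastEigenmatrix_mul_self hG hrs)
  have hcubes := sum_cube_entries_nonneg_of_posSemidef hpsd
  rw [sum_cube_leastEigenmatrix hG.regular hc] at hcubes
  have hfactor : ((r + c) ^ 3 + k * (c - 1) ^ 3 + (Fintype.card V - 1 - k) * c ^ 3) *
      (k + s) ^ 2 =
      (r + 1) * k * ((k - s) * (r + 1) ^ 2 - (1 - s) * (k - s - 2 * r * s)) := by
    linear_combination (c * (k + s)) ^ 2 * hnc + 3 * (r ^ 2 + k) * (k + s) * hks -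
      2 * (k - r) * (c * (k + s) + k - r * s) * hks
  have hkrein := mul_nonneg (nonneg_of_mul_nonneg_right hcubes hcard) (sq_nonneg (k + s))
  rw [hfactor] at hkrein
  exact sub_nonneg.mp (nonneg_of_mul_nonneg_right hkrein (by positivity))

end StronglyRegular

lemma fifty_mul_le_seven_mul {r : ℕ} {s : ℝ} (hr : 1 ≤ r) (hrs : r ≤ s)
    (hkrein : s ≤ r ^ 2 + 2 * r) :
    50 * (r * (s - 1)) * (s - r) ≤ 7 * (((r + 1) * s - 2 * r) * ((r + 2) * s - r)) := by
  have hdiff : 7 * (((r + 1) * s - 2 * r) * ((r + 2) * s - r)) - 50 * (r * (s - 1)) * (s - r) =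
      (7 * r ^ 2 - 29 * r + 14) * s ^ 2 + (29 * r ^ 2 + 15 * r) * s - 36 * r ^ 2 := by ring
  have hends : 0 ≤ (s - r) * (r ^ 2 + 2 * r - s) :=
    mul_nonneg (sub_nonneg.mpr hrs) (sub_nonneg.mpr hkrein)
  rw [← sub_nonneg, hdiff]
  obtain rfl | rfl | rfl | hr4 : r = 1 ∨ r = 2 ∨ r = 3 ∨ 4 ≤ r := by omega
  iterate 3
    · push_cast at *
      linarith
  · have hr4' : (4 : ℝ) ≤ r := by exact_mod_cast hr4
    have hlead : 0 ≤ 7 * (r : ℝ) ^ 2 - 29 * r + 14 := by nlinarith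
    have hrest : 36 * (r : ℝ) ^ 2 ≤ (29 * r ^ 2 + 15 * r) * s := by nlinarith
    linarith [mul_nonneg hlead (sq_nonneg s)]

section TriangleFree

variable {G : SimpleGraph V} [DecidableRel G.Adj] {n k ℓ m b : ℕ} {r s : ℝ}

lemma isSRGWith_zero_of_degree_one (hG : G.IsSRGWith n 1 ℓ m) : G.IsSRGWith n 1 ℓ 0 where
  card := hG.card
  regular := hG.regular
  of_adj := hG.of_adj
  of_not_adj u v huv _ := by
    rw [Fintype.card_eq_zero_iff]
    refine ⟨fun ⟨w, huw, hvw⟩ => huv ?_⟩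
    have hw : (G.neighborFinset w).card ≤ 1 := (hG.regular.degree_eq w).le
    exact Finset.card_le_one.mp hw u (by simpa using huw.symm) v (by simpa using hvw.symm)

lemma param_pos_and_le_degree (hG : G.IsSRGWith n k 0 b) (hn : 0 < n) (hk : 2 ≤ k) :
    0 < b ∧ b ≤ k := by
  classical
  have hcount := IsSRGWith.param_eq G hG hn
  have hpos : 0 < (n - k - 1) * b := hcount ▸ Nat.mul_pos (by omega) (by omega)
  refine ⟨Nat.pos_of_mul_pos_left hpos, ?_⟩
  have : Nonempty V := Fintype.card_pos_iff.mp (hG.card ▸ hn)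
  obtain ⟨u⟩ := this
  have hdeg : 0 < Gᶜ.degree u := by
    rw [hG.compl_is_regular.degree_eq u]
    exact Nat.pos_of_mul_pos_right hpos
  obtain ⟨v, huv⟩ := (Gᶜ.degree_pos_iff_exists_adj u).mp hdeg
  rw [compl_adj] at huv
  rw [← hG.of_not_adj huv.1 huv.2, ← hG.regular.degree_eq u]
  exact G.card_commonNeighbors_le_degree_left u v

/-- The exceptional case is that of the pentagon. -/
lemma degree_sub_le_of_two_mul_degree_eq [Nonempty V] (hG : G.IsSRGWith n k 0 b) (hb : 0 < b)
    (hbk : b ≤ k) (hrs : IsRestrictedPair k 0 b r s) (hr : 0 ≤ r)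
    (hhalf : 2 * (k : ℝ) = (n - 1) * b) : k - s ≤ 0.14 * n := by
  have hcount := degree_sub_mul_degree_add hG hrs
  obtain ⟨hsub, hmul⟩ := hrs
  have hk : (k : ℝ) ≠ 0 := by exact_mod_cast (hb.trans_le hbk).ne'
  have hkb : (k : ℝ) + b = 3 := mul_left_cancel₀ hk <| by
    push_cast at hsub
    linear_combination hcount + k * hsub + hmul - hhalf
  have hkb' : k + b = 3 := by exact_mod_cast hkb
  obtain rfl : k = 2 := by omega
  obtain rfl : b = 1 := by omega
  push_cast at hsub hmul hhalf ⊢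
  obtain rfl : s = r + 1 := by linarith
  have hn : (n : ℝ) = 5 := by linarith
  have hr' : 0.3 ≤ r := by
    by_contra! hlt
    nlinarith
  rw [hn]
  linarith

lemma degree_sub_le_of_eq_natCast [Nonempty V] (hG : G.IsSRGWith n k 0 b) (hb : 0 < b)
    (hbk : b ≤ k) {t : ℕ} (hts : IsRestrictedPair k 0 b t s) : k - s ≤ 0.14 * n := by
  have hcount := degree_sub_mul_degree_add hG hts
  have hkrein := fun hs => krein_condition hG hts (hb.trans_le hbk) t.cast_nonneg hs
  obtain ⟨hsub, hmul⟩ := hts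
  have hb' : (0 : ℝ) < b := by exact_mod_cast hb
  have hsb : (b : ℝ) = s - t := by push_cast at hsub; linarith
  have hk : (k : ℝ) = (t + 1) * s - t := by linarith
  rw [hk, hsb] at hcount
  rw [hk] at hkrein ⊢
  obtain rfl | ht := t.eq_zero_or_pos
  · have hbound : 0 ≤ 0.14 * (n : ℝ) := by positivity
    simpa using hbound
  have ht' : (1 : ℝ) ≤ t := by exact_mod_cast ht
  have hlt : (t : ℝ) < s := by linarith
  have hs_le : s ≤ t ^ 2 + 2 * t := by
    have hpos : 0 < t * (s - 1) := by nlinarith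
    have hprod : 0 ≤ t * (s - 1) * (t ^ 2 + 2 * t - s) := by linarith [hkrein (by linarith)]
    exact sub_nonneg.mp (nonneg_of_mul_nonneg_right hprod hpos)
  have hbound := fifty_mul_le_seven_mul ht hlt.le hs_le
  have hmul_le : 50 * (t * (s - 1)) * (s - t) ≤ 7 * n * (s - t) := by linarith
  linarith [le_of_mul_le_mul_right hmul_le (sub_pos.mpr hlt)]

lemma exists_mem_spectrum_degree_add_le [DecidableEq V] [Nonempty V]
    (hG : G.IsSRGWith n k 0 b) :
    ∃ τ ∈ spectrum ℝ (G.adjMatrix ℝ), k + τ ≤ 0.14 * n := by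
  have hn : 0 < n := hG.card ▸ Fintype.card_pos
  obtain rfl | rfl | hk : k = 0 ∨ k = 1 ∨ 2 ≤ k := by omega
  · have hA : (G.adjMatrix ℝ).IsHermitian := G.isHermitian_adjMatrix ℝ
    obtain ⟨u⟩ := ‹Nonempty V›
    have hτ := hA.eigenvalues_mem_spectrum_real u
    have hτ_le := le_of_mem_spectrum_adjMatrix (fun v => (hG.regular.degree_eq v).le) hτ
    refine ⟨_, hτ, ?_⟩
    rw [Nat.cast_zero] at hτ_le ⊢
    rw [zero_add]
    exact hτ_le.trans (by positivity)
  · have hpair : IsRestrictedPair 1 0 0 1 1 := ⟨by simp, by simp⟩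
    refine ⟨-1, neg_mem_spectrum_adjMatrix (isSRGWith_zero_of_degree_one hG) hpair one_pos
      zero_le_one, ?_⟩
    rw [Nat.cast_one, add_neg_cancel]
    positivity
  · obtain ⟨hb, hbk⟩ := param_pos_and_le_degree hG hn hk
    obtain ⟨r, s, hr, hrs⟩ := exists_isRestrictedPair 0 hbk
    refine ⟨-s, neg_mem_spectrum_adjMatrix hG hrs (by omega) hr, ?_⟩
    rw [← sub_eq_add_neg]
    have hb' : (0 : ℝ) < b := by exact_mod_cast hb
    have hne : r + s ≠ 0 := by
      have hsub := hrs.sub_eq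
      push_cast at hsub
      linarith
    obtain ⟨z, rfl⟩ | hhalf := exists_int_eq_or_two_mul_degree_eq hG hrs hne
    · lift z to ℕ using by exact_mod_cast hr
      exact degree_sub_le_of_eq_natCast hG hb hbk (by exact_mod_cast hrs)
    · exact degree_sub_le_of_two_mul_degree_eq hG hb hbk hrs hr (by simpa using hhalf)

end TriangleFree

theorem srg_triangle_free_sum_extreme_eigenvalues_general
    {V : Type*} [Fintype V] [DecidableEq V] {n k b : ℕ} (hn : 0 < n)
    {G : SimpleGraph V} [DecidableRel G.Adj] (hsrg : G.IsSRGWith n k 0 b)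
    (hA : (G.adjMatrix ℝ).IsHermitian) {μ : Fin n → ℝ} (hmono : Antitone μ)
    (e : Fin n ≃ V) (hμ : ∀ i, μ i = hA.eigenvalues (e i)) :
    μ ⟨0, hn⟩ + μ ⟨n - 1, Nat.sub_one_lt hn.ne'⟩ ≤ (0.14 : ℝ) * n := by
  have : Nonempty V := ⟨e ⟨0, hn⟩⟩
  have hmax : μ ⟨0, hn⟩ ≤ k := by
    rw [hμ]
    exact le_of_mem_spectrum_adjMatrix (fun v => (hsrg.regular.degree_eq v).le)
      (hA.eigenvalues_mem_spectrum_real _)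
  obtain ⟨τ, hτ, hle⟩ := exists_mem_spectrum_degree_add_le hsrg
  rw [hA.spectrum_real_eq_range_eigenvalues] at hτ
  obtain ⟨v, rfl⟩ := hτ
  have hmin : μ ⟨n - 1, Nat.sub_one_lt hn.ne'⟩ ≤ hA.eigenvalues v := by
    rw [← e.apply_symm_apply v, ← hμ]
    exact hmono (Fin.le_def.mpr (Nat.le_sub_one_of_lt (e.symm v).isLt))
  linarith

/-- Let `G` be a triangle-free simple graph that is strongly regular with
parameters `(n, k, 0, b)`, with adjacency-matrix eigenvalues `μ₁ ≥ ⋯ ≥ μₙ`.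
Then `μ₁ + μₙ ≤ 0.14 n`. -/
theorem srg_triangle_free_sum_extreme_eigenvalues
    (n k b : ℕ) (hn : 0 < n) (G : SimpleGraph (Fin n)) [DecidableRel G.Adj]
    (hsrg : G.IsSRGWith n k 0 b)
    (hG : G.CliqueFree 3)
    (hA : (G.adjMatrix ℝ).IsHermitian)
    (μ : Fin n → ℝ) (hmono : Antitone μ)
    (hperm : ∃ σ : Equiv.Perm (Fin n), ∀ i, μ i = hA.eigenvalues (σ i)) :
    μ ⟨0, hn⟩ + μ ⟨n - 1, by omega⟩ ≤ (0.14 : ℝ) * n := by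
  obtain ⟨σ, hσ⟩ := hperm
  exact srg_triangle_free_sum_extreme_eigenvalues_general hn hsrg hA hmono σ hσ
end

section
/- Let $G$ be a simple graph that is strongly regular with parameters $(n, k, 0, b)$, and let $\mu_1 \geq \mu_2 \geq \dots \geq \mu_n$ be its adjacency-matrix eigenvalues. If $\mu_1 + \mu_n = 0.14\, n$, then $(n, k, b) = (100, 22, 6)$, i.e.\ $G$ is a strongly regular graph with the parameters of the Higman–Sims graph. -/
open Matrix SimpleGraph

/-!
Let `A` be the adjacency matrix of `G`, let `J` be the all-ones matrix and write `θ = μₙ`. The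
largest eigenvalue is `k`, with the all-ones eigenvector, and `θ < 0` because `A` has trace zero.
Since `A ^ 2 + b A + (b - k) = b J` and `J` kills the eigenvectors for `θ`, we get
`θ ^ 2 + b θ + b = k`, while applying the same identity to the all-ones vector gives
`k ^ 2 + b k + b - k = b n`. The hypothesis `k + θ = 7 n / 50` makes `θ` rational, hence an
integer. With the other root `r = -b - θ` of the quadratic and `c = k + θ = r (r + b - 1)`, the
two relations become `7 c² - 29 b c + 14 b² + 14 r (b + c) = 0`. As `c` is positive, so is `r`;
this equation forces `c < 4 b`, and `r b ≤ c` then leaves `r = 1, 2, 3`, of which only `r = 2` has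
an integral solution, `b = 6`.
-/

section Spectrum

variable {V : Type*} [Fintype V] [DecidableEq V]

lemma mem_spectrum_iff_exists_mulVec_eq_smul {K : Type*} [Field K] {A : Matrix V V K} {θ : K} :
    θ ∈ spectrum K A ↔ ∃ v : V → K, v ≠ 0 ∧ A *ᵥ v = θ • v := by
  rw [← spectrum_toLin', ← Module.End.hasEigenvalue_iff_mem_spectrum]
  constructor
  · intro h
    obtain ⟨v, hv, hv0⟩ := h.exists_hasEigenvector
    exact ⟨v, hv0, Module.End.mem_eigenspace_iff.1 hv⟩
  · rintro ⟨v, hv0, hv⟩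
    exact Module.End.hasEigenvalue_of_hasEigenvector ⟨Module.End.mem_eigenspace_iff.2 hv, hv0⟩

lemma nonempty_of_mem_spectrum {K : Type*} [Field K] {A : Matrix V V K} {θ : K}
    (hθ : θ ∈ spectrum K A) : Nonempty V := by
  obtain ⟨v, hv0, -⟩ := mem_spectrum_iff_exists_mulVec_eq_smul.1 hθ
  exact (Function.ne_iff.1 hv0).nonempty

lemma isIntegral_of_mem_spectrum_map {R K : Type*} [CommRing R] [Field K] [Algebra R K]
    {A : Matrix V V R} {θ : K} (hθ : θ ∈ spectrum K (A.map (algebraMap R K))) :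
    IsIntegral R θ := by
  refine ⟨A.charpoly, A.charpoly_monic, ?_⟩
  rw [mem_spectrum_iff_isRoot_charpoly, charpoly_map] at hθ
  rwa [← Polynomial.eval_map]

lemma spectrum_eq_range_of_eq_eigenvalues_perm {𝕜 : Type*} [RCLike 𝕜] {A : Matrix V V 𝕜}
    (hA : A.IsHermitian) {μ : V → ℝ} {σ : Equiv.Perm V} (hσ : ∀ i, μ i = hA.eigenvalues (σ i)) :
    spectrum ℝ A = Set.range μ := by
  rw [hA.spectrum_real_eq_range_eigenvalues, funext hσ]
  exact (σ.surjective.range_comp hA.eigenvalues).symm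

lemma exists_neg_mem_spectrum_of_trace_eq_zero {𝕜 : Type*} [RCLike 𝕜] {A : Matrix V V 𝕜}
    (hA : A.IsHermitian) (htrace : A.trace = 0) {x : ℝ} (hx : x ∈ spectrum ℝ A) (hx0 : x ≠ 0) :
    ∃ y ∈ spectrum ℝ A, y < 0 := by
  rw [hA.spectrum_real_eq_range_eigenvalues] at hx ⊢
  obtain ⟨i, rfl⟩ := hx
  have hsum : ∑ j, -hA.eigenvalues j = 0 := by
    rw [Finset.sum_neg_distrib, neg_eq_zero]
    exact_mod_cast hA.trace_eq_sum_eigenvalues.symm.trans htrace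
  obtain ⟨j, -, hj⟩ := Finset.exists_pos_of_sum_zero_of_exists_nonzero _ hsum
    ⟨i, Finset.mem_univ i, neg_ne_zero.2 hx0⟩
  exact ⟨_, ⟨j, rfl⟩, neg_pos.1 hj⟩

end Spectrum

lemma isIntegral_of_mem_spectrum_adjMatrix {V : Type*} [Fintype V] [DecidableEq V]
    {G : SimpleGraph V} [DecidableRel G.Adj] {K : Type*} [Field K] {θ : K}
    (hθ : θ ∈ spectrum K (G.adjMatrix K)) : IsIntegral ℤ θ := by
  have hmap : G.adjMatrix K = (G.adjMatrix ℤ).map (algebraMap ℤ K) := by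
    ext i j
    simp [adjMatrix_apply, apply_ite]
  exact isIntegral_of_mem_spectrum_map (hmap ▸ hθ)

section RegularGraph

variable {V : Type*} [Fintype V] {G : SimpleGraph V} [DecidableRel G.Adj] {k : ℕ}

lemma adjMatrix_mulVec_one_of_isRegularOfDegree {R : Type*} [Semiring R]
    (hG : G.IsRegularOfDegree k) : G.adjMatrix R *ᵥ 1 = (k : R) • 1 := by
  ext i
  simpa using adjMatrix_mulVec_const_apply_of_regular (a := (1 : R)) hG (v := i)

lemma sum_eq_zero_of_adjMatrix_mulVec_eq_smul {R : Type*} [CommRing R] [IsDomain R]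
    (hG : G.IsRegularOfDegree k) {θ : R} (hθ : θ ≠ k) {v : V → R}
    (hv : G.adjMatrix R *ᵥ v = θ • v) : ∑ i, v i = 0 := by
  have hk : (k : R) * ∑ i, v i = θ * ∑ i, v i := by
    simpa [adjMatrix_mulVec_one_of_isRegularOfDegree hG, hv, ← mulVec_transpose,
      one_dotProduct] using (dotProduct_mulVec 1 (G.adjMatrix R) v).symm
  exact (mul_eq_mul_right_iff.1 hk).resolve_left hθ.symm

variable [DecidableEq V]

lemma isGreatest_spectrum_adjMatrix_of_isRegularOfDegree [Nonempty V]
    (hG : G.IsRegularOfDegree k) : IsGreatest (spectrum ℝ (G.adjMatrix ℝ)) (k : ℝ) := by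
  refine ⟨mem_spectrum_iff_exists_mulVec_eq_smul.2
    ⟨1, one_ne_zero, adjMatrix_mulVec_one_of_isRegularOfDegree hG⟩, fun θ hθ => ?_⟩
  rw [← spectrum_toLin', ← Module.End.hasEigenvalue_iff_mem_spectrum] at hθ
  obtain ⟨i, hi⟩ := eigenvalue_mem_ball hθ
  have hradius : ∑ j ∈ Finset.univ.erase i, ‖G.adjMatrix ℝ i j‖ = k := by
    rw [Finset.sum_erase _ (by simp)]
    simp [adjMatrix_apply, apply_ite, Finset.sum_boole, ← neighborFinset_eq_filter,
      hG.degree_eq]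
  rw [hradius, adjMatrix_apply, if_neg (G.irrefl), mem_closedBall_zero_iff] at hi
  exact (le_abs_self θ).trans hi

end RegularGraph

section StronglyRegularGraph

variable {V : Type*} [Fintype V] {G : SimpleGraph V} [DecidableRel G.Adj]
  {n k a b : ℕ}

lemma adjMatrix_sq_eq_of_isSRGWith [DecidableEq V] {R : Type*} [CommRing R]
    (hG : G.IsSRGWith n k a b) :
    G.adjMatrix R ^ 2 =
      (k - b : R) • 1 + (a - b : R) • G.adjMatrix R + (b : R) • Matrix.of 1 := by
  have hcompl : Gᶜ.adjMatrix R = Matrix.of 1 - 1 - G.adjMatrix R := by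
    rw [← adjMatrix_completeGraph_eq_of_one_sub_one R V,
      ← IsCompl.adjMatrix_add_adjMatrix_eq_adjMatrix_completeGraph R (isCompl_compl (x := G)),
      add_sub_cancel_left]
  rw [hG.matrix_eq, hcompl]
  module

lemma sq_sub_mul_sub_mul_apply_eq_of_isSRGWith {R : Type*} [CommRing R]
    (hG : G.IsSRGWith n k a b) {v : V → R} {θ : R} (hv : G.adjMatrix R *ᵥ v = θ • v) (i : V) :
    (θ ^ 2 - (a - b) * θ - (k - b)) * v i = b * ∑ j, v j := by
  classical
  have hones : (Matrix.of 1 *ᵥ v) i = ∑ j, v j := by simp [mulVec, dotProduct]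
  have hsq : (G.adjMatrix R ^ 2 *ᵥ v) i = θ ^ 2 * v i := by
    rw [pow_two, ← mulVec_mulVec, hv, mulVec_smul, hv, smul_smul, Pi.smul_apply, smul_eq_mul,
      pow_two]
  simp only [adjMatrix_sq_eq_of_isSRGWith hG, add_mulVec, smul_mulVec, one_mulVec, hv,
    Pi.add_apply, Pi.smul_apply, smul_eq_mul, hones] at hsq
  linear_combination -hsq

lemma sq_sub_mul_sub_eq_mul_card_of_isSRGWith [Nonempty V] (hG : G.IsSRGWith n k a b) :
    (k ^ 2 - (a - b) * k - (k - b) : ℤ) = b * n := by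
  simpa [hG.card] using sq_sub_mul_sub_mul_apply_eq_of_isSRGWith hG
    (adjMatrix_mulVec_one_of_isRegularOfDegree (R := ℤ) hG.regular) (Classical.arbitrary V)

lemma sq_sub_mul_sub_eq_zero_of_isSRGWith [DecidableEq V] {K : Type*} [Field K]
    (hG : G.IsSRGWith n k a b) {θ : K} (hθ : θ ∈ spectrum K (G.adjMatrix K)) (hθk : θ ≠ k) :
    θ ^ 2 - (a - b) * θ - (k - b) = 0 := by
  obtain ⟨v, hv0, hv⟩ := mem_spectrum_iff_exists_mulVec_eq_smul.1 hθ
  obtain ⟨i, hi⟩ := Function.ne_iff.1 hv0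
  have h := sq_sub_mul_sub_mul_apply_eq_of_isSRGWith hG hv i
  rw [sum_eq_zero_of_adjMatrix_mulVec_eq_smul hG.regular hθk hv, mul_zero] at h
  exact (mul_eq_zero.1 h).resolve_right hi

end StronglyRegularGraph

section Diophantine

lemma lt_four_mul_of_quadratic_nonpos {R : Type*} [CommRing R] [LinearOrder R]
    [IsStrictOrderedRing R] {b c : R} (hb : 0 < b)
    (h : 7 * c ^ 2 - 29 * b * c + 14 * b ^ 2 ≤ 0) : c < 4 * b := by
  by_contra! hbc
  refine h.not_gt ?_
  have : 0 ≤ b * (c - 4 * b) := mul_nonneg hb.le (sub_nonneg.2 hbc)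
  calc
    0 < 7 * (c - 4 * b) ^ 2 + 27 * (b * (c - 4 * b)) + 10 * b ^ 2 := by positivity
    _ = 7 * c ^ 2 - 29 * b * c + 14 * b ^ 2 := by ring

lemma eq_two_and_eq_six_of_quadratic_eq_zero {b c r : ℤ} (hb : 0 < b) (hr : 0 < r)
    (hc : c = r * (r + b - 1))
    (h : 7 * c ^ 2 - 29 * b * c + 14 * b ^ 2 + 14 * r * (b + c) = 0) : r = 2 ∧ b = 6 := by
  have hrb : r * b ≤ c := hc ▸ mul_le_mul_of_nonneg_left (by linarith) hr.le
  have hcpos : 0 < c := (mul_pos hr hb).trans_le hrb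
  have hcb : c < 4 * b := by
    refine lt_four_mul_of_quadratic_nonpos hb ?_
    have : 0 ≤ r * (b + c) := by positivity
    linarith
  have hr4 : r < 4 := lt_of_mul_lt_mul_right (hrb.trans_lt hcb) hb.le
  subst hc
  interval_cases r
  · have : b * (8 * b - 28) = 0 := by linear_combination -h
    rcases mul_eq_zero.1 this with hb0 | hb0 <;> omega
  · have : (b - 6) * (8 * b + 7) = 0 := by linarith
    rcases mul_eq_zero.1 this with hb0 | hb0 <;> omega
  · have hb3 : b * (5 * b - 123) = 252 := by linarith
    rcases le_or_gt b 26 with hb26 | hb26 <;> nlinarith [hb3]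

lemma higmanSims_parameters_of_feasibility_equations {n k b θ : ℤ} (hn : 0 < n) (hb : 0 ≤ b)
    (hθ : θ < 0) (hroot : θ ^ 2 + b * θ + b = k) (hcount : k ^ 2 + b * k + b - k = b * n)
    (h : 50 * (k + θ) = 7 * n) : n = 100 ∧ k = 22 ∧ b = 6 := by
  obtain ⟨r, rfl⟩ : ∃ r, θ = -(r + b) := ⟨-θ - b, by ring⟩
  obtain ⟨c, hc⟩ : ∃ c, c = r * (r + b - 1) := ⟨_, rfl⟩
  have hk : k = c + (r + b) := by linear_combination -hc - hroot
  subst hk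
  have hcpos : 0 < c := by linarith
  have hr : 0 < r := pos_of_mul_pos_left (hc ▸ hcpos) (by linarith)
  have hfactor : (b + c) * (c + 2 * (r + b)) = b * n := by
    linear_combination hcount + hc
  have hbpos : 0 < b := by
    refine pos_of_mul_pos_left (hfactor ▸ ?_) hn.le
    positivity
  have hquad : 7 * c ^ 2 - 29 * b * c + 14 * b ^ 2 + 14 * r * (b + c) = 0 := by
    linear_combination 7 * hfactor - b * h
  obtain ⟨rfl, rfl⟩ := eq_two_and_eq_six_of_quadratic_eq_zero hbpos hr hc hquad
  omega

end Diophantine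

section HigmanSims

variable {V : Type*} [Fintype V] [DecidableEq V] {G : SimpleGraph V} [DecidableRel G.Adj]
  {n k b : ℕ}

lemma higmanSims_parameters_of_neg_mem_spectrum (hG : G.IsSRGWith n k 0 b) {θ : ℝ}
    (hθ : θ ∈ spectrum ℝ (G.adjMatrix ℝ)) (hneg : θ < 0) (h : k + θ = 0.14 * n) :
    n = 100 ∧ k = 22 ∧ b = 6 := by
  have : Nonempty V := nonempty_of_mem_spectrum hθ
  have hn : 0 < n := hG.card ▸ Fintype.card_pos
  have hrat : θ = ((7 * n / 50 - k : ℚ) : ℝ) := by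
    push_cast
    linarith
  obtain ⟨z, rfl⟩ : ∃ z : ℤ, θ = z :=
    (isIntegral_of_mem_spectrum_adjMatrix hθ).exists_int_iff_exists_rat.1 ⟨_, hrat⟩
  have hroot := sq_sub_mul_sub_eq_zero_of_isSRGWith hG hθ
    (hneg.trans_le k.cast_nonneg).ne
  have hcount := sq_sub_mul_sub_eq_mul_card_of_isSRGWith hG
  push_cast at hroot hcount
  have hrootℤ : z ^ 2 + b * z + b = (k : ℤ) := by
    exact_mod_cast (by linear_combination hroot : (z : ℝ) ^ 2 + b * z + b = k)
  have hsumℤ : 50 * (k + z) = 7 * (n : ℤ) := by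
    exact_mod_cast (by linarith : 50 * (k + z) = 7 * (n : ℝ))
  have hcountℤ : (k : ℤ) ^ 2 + b * k + b - k = b * n := by linear_combination hcount
  exact_mod_cast higmanSims_parameters_of_feasibility_equations (by exact_mod_cast hn)
    b.cast_nonneg (by exact_mod_cast hneg) hrootℤ hcountℤ hsumℤ

theorem srg_equality_case_higman_sims_general (hG : G.IsSRGWith n k 0 b) {M m : ℝ}
    (hM : IsGreatest (spectrum ℝ (G.adjMatrix ℝ)) M)
    (hm : IsLeast (spectrum ℝ (G.adjMatrix ℝ)) m) (h : M + m = 0.14 * n) :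
    n = 100 ∧ k = 22 ∧ b = 6 := by
  have : Nonempty V := nonempty_of_mem_spectrum hM.1
  obtain rfl : M = k := hM.unique (isGreatest_spectrum_adjMatrix_of_isRegularOfDegree hG.regular)
  have hn : (0 : ℝ) < n := by exact_mod_cast hG.card ▸ Fintype.card_pos
  have hk : (k : ℝ) ≠ 0 := by
    have := hM.2 hm.1
    intro hk0
    linarith
  obtain ⟨y, hy, hyneg⟩ := exists_neg_mem_spectrum_of_trace_eq_zero
    (G.isHermitian_adjMatrix ℝ) (G.trace_adjMatrix ℝ) hM.1 hk
  exact higmanSims_parameters_of_neg_mem_spectrum hG hm.1 ((hm.2 hy).trans_lt hyneg) h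

end HigmanSims

/-- Let `G` be a strongly regular graph with parameters `(n, k, 0, b)` and
adjacency-matrix eigenvalues `μ₁ ≥ ⋯ ≥ μₙ`. If `μ₁ + μₙ = 0.14 n`, then
`(n, k, b) = (100, 22, 6)`, i.e. `G` has the parameters of the Higman–Sims graph. -/
theorem srg_equality_case_higman_sims
    (n k b : ℕ) (hn : 0 < n) (G : SimpleGraph (Fin n)) [DecidableRel G.Adj]
    (hsrg : G.IsSRGWith n k 0 b)
    (hA : (G.adjMatrix ℝ).IsHermitian)
    (μ : Fin n → ℝ) (hmono : Antitone μ)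
    (hperm : ∃ σ : Equiv.Perm (Fin n), ∀ i, μ i = hA.eigenvalues (σ i))
    (heq : μ ⟨0, hn⟩ + μ ⟨n - 1, by omega⟩ = (0.14 : ℝ) * n) :
    n = 100 ∧ k = 22 ∧ b = 6 := by
  obtain ⟨σ, hσ⟩ := hperm
  have hspec := spectrum_eq_range_of_eq_eigenvalues_perm hA hσ
  exact srg_equality_case_higman_sims_general hsrg
    (hspec ▸ ⟨Set.mem_range_self _, Set.forall_mem_range.2 fun i => hmono (Nat.zero_le i)⟩)
    (hspec ▸ ⟨Set.mem_range_self _,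
      Set.forall_mem_range.2 fun i => hmono (Nat.le_sub_one_of_lt i.isLt)⟩) heq
end

section
/- Let $G$ be a $d$-regular triangle-free simple graph on $n$ vertices with $d < n$, and let $\mu_n$ denote the smallest eigenvalue of its adjacency matrix. Then $\mu_n \leq -\dfrac{d^2}{n - d}$. -/
open Matrix SimpleGraph

/-!
The neighbourhood `S` of a vertex contained in no triangle is an independent set of size `d`, so
the claim is the Hoffman ratio bound for `S`. That bound follows by evaluating the quadratic form
of `A - m`, where `m` is at most every eigenvalue of `A`, at the component `n 1_S - |S| 1` of
`n 1_S` orthogonal to the eigenvector `1`. For `d = 0` the set `S` is empty, and `m` is instead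
compared with a diagonal entry of `A`.
-/

section HermitianMatrix

open scoped ComplexOrder MatrixOrder

variable {V 𝕜 : Type*} [Fintype V] [DecidableEq V] [RCLike 𝕜] {A : Matrix V V 𝕜} {m : ℝ}

theorem posSemidef_sub_algebraMap_of_mem_lowerBounds_spectrum (hA : A.IsHermitian)
    (hm : m ∈ lowerBounds (spectrum ℝ A)) : (A - algebraMap ℝ (Matrix V V 𝕜) m).PosSemidef :=
  Matrix.le_iff.mp <| (algebraMap_le_iff_le_spectrum hA.isSelfAdjoint).mpr fun _ hx ↦ hm hx

theorem le_diag_of_mem_lowerBounds_spectrum (hA : A.IsHermitian)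
    (hm : m ∈ lowerBounds (spectrum ℝ A)) (v : V) : (m : 𝕜) ≤ A v v := by
  simpa [Matrix.algebraMap_matrix_apply] using
    (posSemidef_sub_algebraMap_of_mem_lowerBounds_spectrum hA hm).diag_nonneg (i := v)

theorem mul_dotProduct_le_of_mem_lowerBounds_spectrum (hA : A.IsHermitian)
    (hm : m ∈ lowerBounds (spectrum ℝ A)) (x : V → 𝕜) :
    (m : 𝕜) * (star x ⬝ᵥ x) ≤ star x ⬝ᵥ A *ᵥ x := by
  have h :=
    (posSemidef_sub_algebraMap_of_mem_lowerBounds_spectrum hA hm).dotProduct_mulVec_nonneg x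
  rwa [sub_mulVec, Algebra.algebraMap_eq_smul_one, smul_mulVec, one_mulVec, dotProduct_sub,
    dotProduct_smul, RCLike.real_smul_eq_coe_mul, sub_nonneg] at h

theorem antitone_eigenvalues_top_mem_lowerBounds_spectrum {ι : Type*} [Preorder ι]
    (hA : A.IsHermitian) {μ : ι → ℝ} (hμ : Antitone μ) (σ : ι ≃ V)
    (hσ : ∀ i, μ i = hA.eigenvalues (σ i)) {t : ι} (ht : IsTop t) :
    μ t ∈ lowerBounds (spectrum ℝ A) := by
  rw [hA.spectrum_real_eq_range_eigenvalues]
  rintro _ ⟨v, rfl⟩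
  simpa only [hσ, Equiv.apply_symm_apply] using hμ (ht (σ.symm v))

end HermitianMatrix

section HoffmanBound

variable {V : Type*} [Fintype V]

theorem indicator_one_dotProduct_mulVec_indicator_one {R : Type*} [NonAssocSemiring R]
    (A : Matrix V V R) (S T : Finset V) :
    (S : Set V).indicator 1 ⬝ᵥ A *ᵥ (T : Set V).indicator 1 = ∑ i ∈ S, ∑ j ∈ T, A i j := by
  classical
  simp [dotProduct, mulVec, Set.indicator_apply, Finset.sum_ite_mem]

theorem hoffman_ratio_bound [DecidableEq V] {A : Matrix V V ℝ} {m d : ℝ} (hA : A.IsHermitian)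
    (hm : m ∈ lowerBounds (spectrum ℝ A)) (hd : A *ᵥ 1 = d • 1)
    {S : Finset V} (hS : S.Nonempty) (hAS : ∀ i ∈ S, ∀ j ∈ S, A i j = 0) :
    m * (Fintype.card V - S.card) ≤ -(d * S.card) := by
  let n : ℝ := Fintype.card V
  let s : ℝ := S.card
  let χ : V → ℝ := (S : Set V).indicator 1
  have hχ_one : χ ⬝ᵥ 1 = s := by simp [χ, s, dotProduct, Set.indicator_apply]
  have hone_χ : 1 ⬝ᵥ χ = s := by rw [dotProduct_comm, hχ_one]
  have hχ_χ : χ ⬝ᵥ χ = s := by simp [χ, s, dotProduct, Set.indicator_apply]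
  have hone_one : (1 : V → ℝ) ⬝ᵥ 1 = n := by simp [n]
  have hχ_A_χ : χ ⬝ᵥ A *ᵥ χ = 0 := by
    rw [indicator_one_dotProduct_mulVec_indicator_one]
    exact Finset.sum_eq_zero fun i hi ↦ Finset.sum_eq_zero fun j hj ↦ hAS i hi j hj
  have hone_A_χ : 1 ⬝ᵥ A *ᵥ χ = d * s := by
    have hAT : Aᵀ = A := by simpa using hA.eq
    rw [dotProduct_mulVec, ← mulVec_transpose, hAT, hd, smul_dotProduct, hone_χ, smul_eq_mul]
  have hform := mul_dotProduct_le_of_mem_lowerBounds_spectrum hA hm (n • χ - s • 1)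
  simp only [star_trivial, RCLike.ofReal_real_eq_id, id_eq, mulVec_sub, mulVec_smul, hd,
    dotProduct_sub, sub_dotProduct, dotProduct_smul, smul_dotProduct, smul_eq_mul,
    hχ_one, hone_χ, hχ_χ, hone_one, hχ_A_χ, hone_A_χ] at hform
  have hs : 0 < s := by simpa [s] using hS
  have hn : 0 < n := hs.trans_le (by simpa [s, n] using S.card_le_univ)
  refine le_of_mul_le_mul_left ?_ (mul_pos hn hs)
  linarith

end HoffmanBound

section RegularGraph

variable {V : Type*} [Fintype V] [DecidableEq V] {G : SimpleGraph V} [DecidableRel G.Adj]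
  {d : ℕ} {m : ℝ}

theorem hoffman_ratio_bound_of_isRegularOfDegree (hreg : G.IsRegularOfDegree d)
    (hm : m ∈ lowerBounds (spectrum ℝ (G.adjMatrix ℝ))) {S : Finset V} (hS : S.Nonempty)
    (hGS : G.IsIndepSet S) : m * (Fintype.card V - S.card) ≤ -(d * S.card) := by
  refine hoffman_ratio_bound (G.isHermitian_adjMatrix ℝ) hm ?_ hS ?_
  · ext v
    simpa using adjMatrix_mulVec_const_apply_of_regular (a := (1 : ℝ)) hreg (v := v)
  · intro i hi j hj
    have hij : ¬ G.Adj i j := fun h ↦ hGS hi hj h.ne h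
    simp [hij]

theorem regular_triangle_free_min_eigenvalue_bound_general (hreg : G.IsRegularOfDegree d)
    (hm : m ∈ lowerBounds (spectrum ℝ (G.adjMatrix ℝ))) {v : V}
    (hv : G.IsIndepSet (G.neighborSet v)) :
    m ≤ -(d : ℝ) ^ 2 / (Fintype.card V - d) := by
  rcases d.eq_zero_or_pos with rfl | hd
  · simpa using le_diag_of_mem_lowerBounds_spectrum (G.isHermitian_adjMatrix ℝ) hm v
  have hcard : (G.neighborFinset v).card = d := hreg.degree_eq v
  have hdn : (d : ℝ) < Fintype.card V := by
    exact_mod_cast hreg.degree_eq v ▸ G.degree_lt_card_verts v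
  have hratio := hoffman_ratio_bound_of_isRegularOfDegree hreg hm (S := G.neighborFinset v)
    (Finset.card_pos.mp (hcard ▸ hd)) (by simpa using hv)
  rw [hcard] at hratio
  rwa [le_div_iff₀ (sub_pos.mpr hdn), sq]

end RegularGraph

/-- Let `G` be a `d`-regular triangle-free simple graph on `n` vertices
with `d < n`, and let `μₙ` be the smallest eigenvalue of its adjacency matrix. Then
`μₙ ≤ -d² / (n - d)`. -/
theorem regular_triangle_free_min_eigenvalue_bound
    (n d : ℕ) (hd : d < n) (G : SimpleGraph (Fin n)) [DecidableRel G.Adj]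
    (hreg : G.IsRegularOfDegree d)
    (hG : G.CliqueFree 3)
    (hA : (G.adjMatrix ℝ).IsHermitian)
    (μ : Fin n → ℝ) (hmono : Antitone μ)
    (hperm : ∃ σ : Equiv.Perm (Fin n), ∀ i, μ i = hA.eigenvalues (σ i)) :
    μ ⟨n - 1, by omega⟩ ≤ -((d : ℝ) ^ 2) / ((n : ℝ) - d) := by
  obtain ⟨σ, hσ⟩ := hperm
  have hm : μ ⟨n - 1, by omega⟩ ∈ lowerBounds (spectrum ℝ (G.adjMatrix ℝ)) :=
    antitone_eigenvalues_top_mem_lowerBounds_spectrum hA hmono σ hσ fun i ↦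
      Fin.le_def.mpr (Nat.le_sub_one_of_lt i.isLt)
  simpa using regular_triangle_free_min_eigenvalue_bound_general hreg hm
    (isIndepSet_neighborSet_of_triangleFree G hG ⟨0, by omega⟩)
end
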